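/- Let A be a commutative ring of prime characteristic p, let e ≥ 1 be an integer, let g ∈ A[x], and let ℓ be an integer with 0 < ℓ < p^e. Then the ℓ-th Hasse derivative of g^{p^e} is zero: D_ℓ(g^{p^e}) = 0. -/

import Mathlib

/-!
Over `A[x][y]` the Hasse derivatives of `g` are the coefficients of the Taylor expansion
`g(x + y) = ∑ D_ℓ(g) y ^ ℓ`. Expanding `g ^ q` for `q = p ^ e` thus gives the `q`-th power of the
polynomial `g(x + y)` in `y` over the characteristic-`p` ring `A[x]`, and by Frobenius only the
powers `y ^ k` with `q ∣ k` occur in it.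
-/

open Polynomial

section Semiring

variable {R S : Type*} [Semiring R] [Semiring S]

theorem hasseDeriv_map (f : R[X]) (φ : R →+* S) (k : ℕ) :
    hasseDeriv k (f.map φ) = (hasseDeriv k f).map φ := by
  ext n
  simp only [hasseDeriv_coeff, coeff_map, map_mul, map_natCast]

theorem coeff_taylor_X_map_C (f : R[X]) (k : ℕ) :
    (taylor X (f.map C)).coeff k = hasseDeriv k f := by
  rw [taylor_coeff, hasseDeriv_map, eval_map, eval₂_C_X]

end Semiring

section ExpChar

variable {R : Type*} [CommSemiring R] (p : ℕ) [ExpChar R p] {e k : ℕ}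

theorem coeff_pow_expChar_pow_of_not_dvd (f : R[X]) (hk : ¬p ^ e ∣ k) :
    (f ^ p ^ e).coeff k = 0 := by
  rw [← map_iterateFrobenius_expand p f e, coeff_map,
    coeff_expand (pow_pos (expChar_pos R p) e), if_neg hk, map_zero]

theorem hasseDeriv_pow_prime_pow_eq_zero_general (g : R[X]) (hk : ¬p ^ e ∣ k) :
    hasseDeriv k (g ^ p ^ e) = 0 := by
  rw [← coeff_taylor_X_map_C, Polynomial.map_pow, taylor_pow]
  exact coeff_pow_expChar_pow_of_not_dvd p _ hk

end ExpChar

/-- For a commutative ring `A` of prime characteristic `p`, `e ≥ 1`, `g ∈ A[x]` and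
`0 < ℓ < p^e`, the `ℓ`-th Hasse derivative of `g^{p^e}` vanishes. -/
theorem hasseDeriv_pow_prime_pow_eq_zero (A : Type*) [CommRing A] (p : ℕ) [Fact p.Prime]
    [CharP A p] (e : ℕ) (he : 1 ≤ e) (g : Polynomial A) (ℓ : ℕ) (h0 : 0 < ℓ)
    (h1 : ℓ < p ^ e) :
    hasseDeriv ℓ (g ^ (p ^ e)) = 0 :=
  hasseDeriv_pow_prime_pow_eq_zero_general p g (Nat.not_dvd_of_pos_of_lt h0 h1)
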